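/- arXiv:2212.00699 — 3 statements merged into one kernel-verified Lean document; each statement's English description precedes it below -/
import Mathlib

section
/- Consider the two-player game G constructed from an Exact Cover by 3-Sets instance (n̂, 𝒜, 𝒞) as described, with desired sets O_1 = O_2 = {c_j^{a_i} : C_j ∈ 𝒞, a_i ∈ C_j}. If there exists a payment promise 𝒱 such that 𝒳⋆_{G[𝒱]} ⊆ O_1 × O_2 and cost(𝒱) = 0, then (n̂, 𝒜, 𝒞) admits an exact cover; in fact 𝒮 = {C_j ∈ 𝒞 : there exists a_i ∈ 𝒜 with c_j^{a_i} undominated for player 2 in G[𝒱]} is an exact cover. -/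
/-!
The game is finite, so every strategy is weakly dominated by an undominated one
(`exists_undominated_ge`), and cost `0` forces all payments to vanish on undominated profiles
(`payment_eq_zero`). Replacing an element strategy by an undominated strategy above it therefore
gives inequalities between the *original* utilities against undominated opponents.

* For player 2 and `a`: if some `c_p^{a-1}` is undominated for player 1, then some `c_j^a` is
  undominated for player 2.
* For player 1 and `a`: there is an undominated `c_j^b` such that every undominated `c_k^d` of
  player 2 with `a ∈ C_k` has `k = j`, and moreover `b = a` if `d = a`.

Thus the set of elements occurring as superscripts of undominated strategies of player 1 is
nonempty and closed under `a ↦ a + 1`, hence is everything, and the same follows for player 2.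
So the sets `C_j` in question cover all elements, and by the second item each element lies in
exactly one of them; double counting gives the cardinality `nh`.
-/

/-- In a game with player set `ι` and strategy sets `S i`, strategy `x` of player `i`
(weakly) dominates strategy `y`: `x` is at least as good against every profile of the
other players' strategies and strictly better against at least one. -/
def Dominates {ι : Type*} [DecidableEq ι] {S : ι → Type*}
    (U : ι → (∀ j, S j) → ℝ) (i : ι) (x y : S i) : Prop :=
  (∀ σ : ∀ j, S j, U i (Function.update σ i y) ≤ U i (Function.update σ i x)) ∧
  (∃ σ : ∀ j, S j, U i (Function.update σ i y) < U i (Function.update σ i x))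

/-- A strategy of player `i` is undominated if no strategy of player `i` dominates it. -/
def Undominated {ι : Type*} [DecidableEq ι] {S : ι → Type*}
    (U : ι → (∀ j, S j) → ℝ) (i : ι) (x : S i) : Prop :=
  ¬ ∃ y : S i, Dominates U i y x

/-- The set `𝒳⋆` of strategy profiles consisting entirely of undominated strategies. -/
def UndomProfiles {ι : Type*} [DecidableEq ι] {S : ι → Type*}
    (U : ι → (∀ j, S j) → ℝ) : Set (∀ j, S j) :=
  {σ | ∀ i, Undominated U i (σ i)}

/-- The cost of a payment promise `V` for the game with utilities `U`:
the maximum, over undominated profiles of the modified game `G[V]`,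
of the total payment. -/
noncomputable def gameCost {ι : Type*} [DecidableEq ι] [Fintype ι] {S : ι → Type*}
    (U V : ι → (∀ j, S j) → ℝ) : ℝ :=
  sSup ((fun σ => ∑ i, V i σ) '' UndomProfiles (fun i σ => U i σ + V i σ))

/-- The rectangular strategy-profile region `O_1 × ⋯ × O_n`. -/
def rectSet {ι : Type*} {S : ι → Type*} (O : ∀ i, Set (S i)) : Set (∀ j, S j) :=
  {σ | ∀ i, σ i ∈ O i}

/-- `S` is an exact cover of the X3C instance with `3 * nh` elements (indexed by
`ZMod m`, `m = 3 * nh`) and sets `C`: `|S| = nh` and every element is covered. -/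
def IsExactCover (m nh : ℕ) (C : ZMod m → Finset (ZMod m)) (S : Set (ZMod m)) : Prop :=
  S.ncard = nh ∧ ∀ a : ZMod m, ∃ j ∈ S, a ∈ C j

/-- The common strategy set of the two players: an element strategy `a_i` (left) or a
strategy `c_j^{a_i}` for a set `C_j` and an element `a_i ∈ C_j` (right). -/
def X3CStrat (m : ℕ) (C : ZMod m → Finset (ZMod m)) : Type :=
  ZMod m ⊕ {p : ZMod m × ZMod m // p.2 ∈ C p.1}

/-- Utility of player 1 (first argument is player 1's strategy):
`U_1(a_i, c_j^{a_i}) = 2` and `U_1(a_i, c_j^{a_m}) = 1` for `a_m ∈ C_j ∖ {a_i}`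
(whenever `a_i ∈ C_j`), `U_1(c_j^{a_i}, c_j^{a_i}) = 2` and
`U_1(c_j^{a_i}, c_j^{a_m}) = 1` for `a_m ∈ C_j ∖ {a_i}`; all other values are 0. -/
def xU1 (m : ℕ) (C : ZMod m → Finset (ZMod m)) :
    X3CStrat m C → X3CStrat m C → ℝ
  | Sum.inl a, Sum.inr p => if a ∈ C p.1.1 then (if p.1.2 = a then 2 else 1) else 0
  | Sum.inr q, Sum.inr p =>
      if p.1.1 = q.1.1 then (if p.1.2 = q.1.2 then 2 else 1) else 0
  | _, _ => 0

/-- Utility of player 2 (first argument is player 1's strategy):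
`U_2(c_p^{a_{i-1}}, a_i) = 1` and `U_2(c_p^{a_{i-1}}, c_j^{a_i}) = 1`
(indices mod `3 nh`); all other values are 0. -/
def xU2 (m : ℕ) (C : ZMod m → Finset (ZMod m)) :
    X3CStrat m C → X3CStrat m C → ℝ
  | Sum.inr q, Sum.inl a => if q.1.2 = a - 1 then 1 else 0
  | Sum.inr q, Sum.inr p => if q.1.2 = p.1.2 - 1 then 1 else 0
  | _, _ => 0

/-- The two-player game built from the X3C instance. -/
def xGame (m : ℕ) (C : ZMod m → Finset (ZMod m)) :
    Fin 2 → (Fin 2 → X3CStrat m C) → ℝ :=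
  fun i σ => if i = 0 then xU1 m C (σ 0) (σ 1) else xU2 m C (σ 0) (σ 1)

/-- The desired strategy set `O_1 = O_2 = {c_j^{a_i} : C_j ∈ 𝒞, a_i ∈ C_j}`. -/
def xDesired (m : ℕ) (C : ZMod m → Finset (ZMod m)) : Set (X3CStrat m C) :=
  Set.range Sum.inr

/-- In a finite game every strategy has an undominated strategy that is at least as good against
all opponents: among the strategies at least as good as `x`, one with maximal total utility over
all profiles is undominated. -/
lemma exists_undominated_ge {ι : Type*} [DecidableEq ι] {S : ι → Type*} [Finite (∀ j, S j)]
    (U : ι → (∀ j, S j) → ℝ) (i : ι) [Finite (S i)] (x : S i) :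
    ∃ y, Undominated U i y ∧
      ∀ σ : ∀ j, S j, U i (Function.update σ i x) ≤ U i (Function.update σ i y) := by
  classical
  cases nonempty_fintype (∀ j, S j)
  obtain ⟨y, hy, hmax⟩ := Set.exists_max_image
    {y : S i | ∀ σ : ∀ j, S j, U i (Function.update σ i x) ≤ U i (Function.update σ i y)}
    (fun y => ∑ σ : ∀ j, S j, U i (Function.update σ i y)) (Set.toFinite _)
    ⟨x, fun σ => le_rfl⟩
  refine ⟨y, ?_, hy⟩
  rintro ⟨z, hz, τ, hτ⟩
  have h1 := hmax z (fun σ => (hy σ).trans (hz σ))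
  have h2 : ∑ σ : ∀ j, S j, U i (Function.update σ i y) <
      ∑ σ : ∀ j, S j, U i (Function.update σ i z) :=
    Finset.sum_lt_sum (fun σ _ => hz σ) ⟨τ, Finset.mem_univ _, hτ⟩
  exact absurd h1 (not_le.mpr h2)

lemma payment_eq_zero {ι : Type*} [DecidableEq ι] [Fintype ι] {S : ι → Type*}
    [Finite (∀ j, S j)] (U V : ι → (∀ j, S j) → ℝ) (hV : ∀ i σ, 0 ≤ V i σ)
    (hcost : gameCost U V = 0) {σ : ∀ j, S j}
    (hσ : σ ∈ UndomProfiles (fun i σ => U i σ + V i σ)) (i : ι) : V i σ = 0 := by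
  have h1 : ∑ i, V i σ ≤ gameCost U V :=
    le_csSup (Set.toFinite _).bddAbove (Set.mem_image_of_mem _ hσ)
  have h2 : V i σ ≤ ∑ i, V i σ :=
    Finset.single_le_sum (f := fun i => V i σ) (fun j _ => hV j σ) (Finset.mem_univ i)
  exact le_antisymm (by linarith) (hV i σ)

instance x3cStrat_finite (m : ℕ) [NeZero m] (C : ZMod m → Finset (ZMod m)) :
    Finite (X3CStrat m C) :=
  inferInstanceAs (Finite (ZMod m ⊕ {p : ZMod m × ZMod m // p.2 ∈ C p.1}))

/-- A nonempty subset of `ℤ/m` closed under adding `1` is everything. -/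
lemma zmod_forall_of_succ {m : ℕ} [NeZero m] {P : ZMod m → Prop} (h0 : ∃ a, P a)
    (hs : ∀ a, P a → P (a + 1)) (b : ZMod m) : P b := by
  obtain ⟨a, ha⟩ := h0
  have h : ∀ n : ℕ, P (a + n) := by
    intro n
    induction n with
    | zero => simpa using ha
    | succ k ih => simpa [add_assoc] using hs _ ih
  simpa using h (b - a).val

/-- A collection of 3-sets covering every element exactly once is an exact cover. -/
lemma isExactCover_of_existsUnique {m nh : ℕ} [NeZero m] (hm : m = 3 * nh)
    {C : ZMod m → Finset (ZMod m)} (hC : ∀ j, (C j).card = 3) (S : Set (ZMod m))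
    (hS : ∀ a, ∃! j, j ∈ S ∧ a ∈ C j) : IsExactCover m nh C S := by
  classical
  refine ⟨?_, fun a => (hS a).exists⟩
  have hdisj : ((S.toFinset : Finset (ZMod m)) : Set (ZMod m)).PairwiseDisjoint C := by
    intro j hj k hk hjk
    rw [Function.onFun, Finset.disjoint_left]
    intro a haj hak
    exact hjk ((hS a).unique ⟨by simpa using hj, haj⟩ ⟨by simpa using hk, hak⟩)
  have hunion : S.toFinset.biUnion C = Finset.univ := by
    ext a
    simpa using (hS a).exists
  have hcard := Finset.card_biUnion hdisj
  rw [hunion, Finset.card_univ, ZMod.card, Finset.sum_congr rfl (fun j _ => hC j),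
    Finset.sum_const, smul_eq_mul] at hcard
  rw [Set.ncard_eq_toFinset_card']
  omega

section Implementation

variable {m : ℕ} [NeZero m] {C : ZMod m → Finset (ZMod m)}
  {V : Fin 2 → (Fin 2 → X3CStrat m C) → ℝ}

/-- `x` is undominated for player `i` in `G[V]`. -/
abbrev XUndom (V : Fin 2 → (Fin 2 → X3CStrat m C) → ℝ) (i : Fin 2) (x : X3CStrat m C) : Prop :=
  Undominated (S := fun _ : Fin 2 => X3CStrat m C) (fun i σ => xGame m C i σ + V i σ) i x

lemma profile_mem {x y : X3CStrat m C} (hx : XUndom V 0 x) (hy : XUndom V 1 y) :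
    (![x, y] : Fin 2 → X3CStrat m C) ∈
      UndomProfiles (S := fun _ : Fin 2 => X3CStrat m C)
        (fun i σ => xGame m C i σ + V i σ) := by
  intro i
  fin_cases i
  · exact hx
  · exact hy

/-- Some undominated strategy of player 1 is at least as good as `x`, in the unmodified game,
against all undominated strategies of player 2. -/
lemma exists_ge_player1 (hV : ∀ i σ, 0 ≤ V i σ) (hcost : gameCost (xGame m C) V = 0)
    (x : X3CStrat m C) :
    ∃ z, XUndom V 0 z ∧ ∀ y, XUndom V 1 y → xU1 m C x y ≤ xU1 m C z y := by
  obtain ⟨z, hz, hle⟩ := exists_undominated_ge (S := fun _ : Fin 2 => X3CStrat m C)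
    (fun i σ => xGame m C i σ + V i σ) 0 x
  refine ⟨z, hz, fun y hy => ?_⟩
  have h := hle ![z, y]
  have hzero := payment_eq_zero _ V hV hcost (profile_mem hz hy) 0
  have hnn := hV 0 (Function.update ![z, y] 0 x)
  have hz' : Function.update (![z, y] : Fin 2 → X3CStrat m C) 0 z = ![z, y] := by simp
  rw [hz'] at h
  simp [xGame, hzero] at h hnn
  linarith

/-- Some undominated strategy of player 2 is at least as good as `y`, in the unmodified game,
against all undominated strategies of player 1. -/
lemma exists_ge_player2 (hV : ∀ i σ, 0 ≤ V i σ) (hcost : gameCost (xGame m C) V = 0)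
    (y : X3CStrat m C) :
    ∃ z, XUndom V 1 z ∧ ∀ x, XUndom V 0 x → xU2 m C x y ≤ xU2 m C x z := by
  obtain ⟨z, hz, hle⟩ := exists_undominated_ge (S := fun _ : Fin 2 => X3CStrat m C)
    (fun i σ => xGame m C i σ + V i σ) 1 y
  refine ⟨z, hz, fun x hx => ?_⟩
  have h := hle ![x, z]
  have hzero := payment_eq_zero _ V hV hcost (profile_mem hx hz) 1
  have hnn := hV 1 (Function.update ![x, z] 1 y)
  have hz' : Function.update (![x, z] : Fin 2 → X3CStrat m C) 1 z = ![x, z] := by simp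
  rw [hz'] at h
  simp [xGame, hzero] at h hnn
  linarith

end Implementation

/-- if some payment promise implements `O_1 × O_2` at cost 0 in the
constructed two-player game, then the X3C instance admits an exact cover; in fact,
the collection of sets `C_j` having some strategy `c_j^{a_i}` undominated for
player 2 in `G[𝒱]` is an exact cover. -/
theorem x3c_game_backward (m nh : ℕ) [NeZero m] (hm : m = 3 * nh)
    (C : ZMod m → Finset (ZMod m))
    (hC : ∀ j : ZMod m, (C j).card = 3)
    (hocc : ∀ a : ZMod m, Set.ncard {j : ZMod m | a ∈ C j} = 3)
    (V : Fin 2 → (Fin 2 → X3CStrat m C) → ℝ)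
    (hV : ∀ i σ, 0 ≤ V i σ)
    (himpl : UndomProfiles (fun i σ => xGame m C i σ + V i σ) ⊆
      rectSet (fun _ : Fin 2 => xDesired m C))
    (hcost : gameCost (xGame m C) V = 0) :
    IsExactCover m nh C
      {j : ZMod m | ∃ b : ZMod m, ∃ h : b ∈ C j,
        Undominated (fun i σ => xGame m C i σ + V i σ) (1 : Fin 2)
          (Sum.inr ⟨(j, b), h⟩)} := by
  obtain ⟨x₀, hx₀, -⟩ := exists_ge_player1 hV hcost (Sum.inl 0 : X3CStrat m C)
  obtain ⟨y₀, hy₀, -⟩ := exists_ge_player2 hV hcost (Sum.inl 0 : X3CStrat m C)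
  have hdes1 : ∀ x, XUndom V 0 x → x ∈ xDesired m C :=
    fun x hx => himpl (profile_mem hx hy₀) 0
  have hdes2 : ∀ y, XUndom V 1 y → y ∈ xDesired m C :=
    fun y hy => himpl (profile_mem hx₀ hy) 1
  have step1 : ∀ a : ZMod m, ∃ j b, ∃ h : b ∈ C j, XUndom V 0 (Sum.inr ⟨(j, b), h⟩) ∧
      ∀ k d, ∀ h' : d ∈ C k, XUndom V 1 (Sum.inr ⟨(k, d), h'⟩) → a ∈ C k →
        k = j ∧ (d = a → b = a) := by
    intro a
    obtain ⟨z, hz, hle⟩ := exists_ge_player1 hV hcost (Sum.inl a : X3CStrat m C)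
    obtain ⟨⟨⟨j, b⟩, h⟩, rfl⟩ := hdes1 z hz
    refine ⟨j, b, h, hz, fun k d h' hy hak => ?_⟩
    have hl := hle _ hy
    simp only [xU1, hak, if_true] at hl
    split_ifs at hl <;> first | (exfalso; linarith) | grind
  have step2 : ∀ a p, ∀ h : a ∈ C p, XUndom V 0 (Sum.inr ⟨(p, a), h⟩) →
      ∃ j, ∃ h' : a + 1 ∈ C j, XUndom V 1 (Sum.inr ⟨(j, a + 1), h'⟩) := by
    intro a p h hx
    obtain ⟨z, hz, hle⟩ := exists_ge_player2 hV hcost (Sum.inl (a + 1) : X3CStrat m C)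
    obtain ⟨⟨⟨j, b⟩, h'⟩, rfl⟩ := hdes2 z hz
    have hl := hle _ hx
    simp only [xU2, add_sub_cancel_right, if_true] at hl
    split_ifs at hl with hab
    · obtain rfl : b = a + 1 := by rw [hab]; ring
      exact ⟨j, h', hz⟩
    · exfalso; linarith
  have all1 : ∀ a : ZMod m, ∃ p, ∃ h : a ∈ C p, XUndom V 0 (Sum.inr ⟨(p, a), h⟩) := by
    refine zmod_forall_of_succ ?_ ?_
    · obtain ⟨⟨⟨p, a⟩, h⟩, rfl⟩ := hdes1 x₀ hx₀
      exact ⟨a, p, h, hx₀⟩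
    · rintro a ⟨p, h, hx⟩
      obtain ⟨k, hk, hy⟩ := step2 a p h hx
      obtain ⟨j, b, hb, hx', huniq⟩ := step1 (a + 1)
      obtain rfl : b = a + 1 := (huniq k (a + 1) hk hy hk).2 rfl
      exact ⟨j, hb, hx'⟩
  refine isExactCover_of_existsUnique hm hC _ fun a => ?_
  obtain ⟨p, h, hx⟩ := all1 (a - 1)
  obtain ⟨k, hk, hy⟩ := step2 (a - 1) p h hx
  obtain ⟨j, b, hb, -, huniq⟩ := step1 a
  have hak : a ∈ C k := by simpa using hk
  refine ⟨k, ⟨⟨a - 1 + 1, hk, hy⟩, hak⟩, ?_⟩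
  rintro l ⟨⟨d, hd, hyl⟩, hal⟩
  exact (huniq l d hd hyl hal).1.trans (huniq k _ hk hy hak).1.symm
end

section
/- Consider the degree-three game G constructed from an Exact Cover by 3-Sets instance (n̂, 𝒜, 𝒞) as described, with desired sets O_{a_i} = {T_{a_i}} for every element player a_i and O_{C_j} = {T_{C_j}, F_{C_j}} for every set player C_j. If for some real δ with 0 ≤ δ < 1 there exists a payment promise 𝒱 such that 𝒳⋆_{G[𝒱]} ⊆ ∏_{i∈N} O_i and cost(𝒱) ≤ δ, then (n̂, 𝒜, 𝒞) admits an exact cover; indeed 𝒮 = {C_j ∈ 𝒞 : the set of undominated strategies of C_j in G[𝒱] equals {T_{C_j}}} is an exact cover. -/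
/-- The utilities of the degree-three graphical game: players are elements (left) and
sets (right), every player plays a Boolean (`true` = the `T`-strategy). An element
player `a` receives 1 iff it plays its `F`-strategy and the number of sets containing
`a` that play their `T`-strategy is 0, 2 or 3; set players always receive 0. -/
def dGame (m : ℕ) [NeZero m] (C : ZMod m → Finset (ZMod m)) :
    (ZMod m ⊕ ZMod m) → ((ZMod m ⊕ ZMod m) → Bool) → ℝ :=
  fun p σ =>
    match p with
    | Sum.inl a =>
        if σ (Sum.inl a) = false ∧
            ((Finset.univ.filter fun j => a ∈ C j ∧ σ (Sum.inr j) = true).card = 0 ∨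
             (Finset.univ.filter fun j => a ∈ C j ∧ σ (Sum.inr j) = true).card = 2 ∨
             (Finset.univ.filter fun j => a ∈ C j ∧ σ (Sum.inr j) = true).card = 3)
        then 1 else 0
    | Sum.inr _ => 0

/-- The desired strategy sets: `O_{a_i} = {T_{a_i}}` for element players and
`O_{C_j} = {T_{C_j}, F_{C_j}}` for set players. -/
def dDesired (m : ℕ) : (ZMod m ⊕ ZMod m) → Set Bool :=
  fun p => match p with
  | Sum.inl _ => {true}
  | Sum.inr _ => Set.univ

lemma Dominates.irrefl {ι : Type*} [DecidableEq ι] {S : ι → Type*}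
    {U : ι → (∀ j, S j) → ℝ} {i : ι} {x : S i} : ¬ Dominates U i x x :=
  fun ⟨_, σ, h⟩ => lt_irrefl _ h

lemma Dominates.asymm {ι : Type*} [DecidableEq ι] {S : ι → Type*}
    {U : ι → (∀ j, S j) → ℝ} {i : ι} {x y : S i} (h : Dominates U i x y) :
    ¬ Dominates U i y x :=
  fun h' => let ⟨σ, hσ⟩ := h.2; (hσ.trans_le (h'.1 σ)).false

lemma exists_undominated_bool {ι : Type*} [DecidableEq ι]
    (U : ι → (ι → Bool) → ℝ) (i : ι) : ∃ b : Bool, Undominated U i b := by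
  by_contra! h
  have h1 := h true
  have h2 := h false
  simp only [Undominated, not_not] at h1 h2
  obtain ⟨_ | _, h1⟩ := h1
  · obtain ⟨_ | _, h2⟩ := h2
    · exact h2.irrefl
    · exact h1.asymm h2
  · exact h1.irrefl

/-- The strategy space is finite, so the supremum defining the cost bounds the total payment
at every undominated profile. -/
lemma sum_le_gameCost {ι : Type*} [DecidableEq ι] [Fintype ι]
    (U V : ι → (ι → Bool) → ℝ) {σ : ι → Bool}
    (hσ : σ ∈ UndomProfiles (fun i σ => U i σ + V i σ)) :
    ∑ i, V i σ ≤ gameCost U V :=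
  le_csSup (Set.toFinite _).bddAbove ⟨σ, hσ, rfl⟩

lemma card_eq_one_of_undom {m : ℕ} [NeZero m] {C : ZMod m → Finset (ZMod m)}
    (hocc : ∀ a : ZMod m, Set.ncard {j : ZMod m | a ∈ C j} = 3)
    {V : (ZMod m ⊕ ZMod m) → ((ZMod m ⊕ ZMod m) → Bool) → ℝ}
    (hV : ∀ p σ, 0 ≤ V p σ)
    (himpl : UndomProfiles (fun p σ => dGame m C p σ + V p σ) ⊆ rectSet (dDesired m))
    (hcost : gameCost (dGame m C) V < 1)
    {σ : (ZMod m ⊕ ZMod m) → Bool}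
    (hσ : σ ∈ UndomProfiles (fun p σ => dGame m C p σ + V p σ)) (a : ZMod m) :
    (Finset.univ.filter fun j => a ∈ C j ∧ σ (Sum.inr j) = true).card = 1 := by
  have hle : (Finset.univ.filter fun j => a ∈ C j ∧ σ (Sum.inr j) = true).card ≤ 3 := by
    rw [← hocc a, ← Set.ncard_coe_finset]
    exact Set.ncard_le_ncard (fun j hj => by simp at hj; exact hj.1) (Set.toFinite _)
  by_contra hne
  have hT : σ (Sum.inl a) = true := himpl hσ (Sum.inl a)
  -- Otherwise replacing the strategy of `a` by `F` gives an undominated profile outside the region.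
  have hF : ¬ Undominated (fun p σ => dGame m C p σ + V p σ) (Sum.inl a) false := by
    intro hF
    have hmem : Function.update σ (Sum.inl a) false ∈
        UndomProfiles (fun p σ => dGame m C p σ + V p σ) := by
      intro p
      by_cases hp : p = Sum.inl a
      · subst hp; simpa using hF
      · simpa [hp] using hσ p
    have h : Function.update σ (Sum.inl a) false (Sum.inl a) = true := himpl hmem (Sum.inl a)
    simp at h
  simp only [Undominated, not_not] at hF
  obtain ⟨_ | _, hdom⟩ := hF
  · exact hdom.irrefl
  have h1 := hdom.1 σ
  have hup : Function.update σ (Sum.inl a) true = σ := by rw [← hT]; simp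
  rw [hup] at h1
  have hU0 : dGame m C (Sum.inl a) σ = 0 := by simp [dGame, hT]
  have hU1 : dGame m C (Sum.inl a) (Function.update σ (Sum.inl a) false) = 1 := by
    simp only [dGame]
    rw [if_pos]
    refine ⟨by simp, ?_⟩
    simp only [ne_eq, reduceCtorEq, not_false_eq_true, Function.update_of_ne]
    omega
  simp only [hU0, hU1] at h1
  have h2 := hV (Sum.inl a) (Function.update σ (Sum.inl a) false)
  have h3 : V (Sum.inl a) σ ≤ ∑ p, V p σ :=
    Finset.single_le_sum (fun p _ => hV p σ) (Finset.mem_univ _)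
  have h4 := sum_le_gameCost (dGame m C) V hσ
  linarith

/-- if for some `0 ≤ δ < 1` a payment promise implements the desired
region of the degree-three game with cost at most `δ`, then the X3C instance admits an
exact cover; in fact the collection of sets whose only undominated strategy in `G[𝒱]`
is the `T`-strategy is an exact cover. -/
theorem deg3_backward (m nh : ℕ) [NeZero m] (hm : m = 3 * nh)
    (C : ZMod m → Finset (ZMod m))
    (hC : ∀ j : ZMod m, (C j).card = 3)
    (hocc : ∀ a : ZMod m, Set.ncard {j : ZMod m | a ∈ C j} = 3)
    (δ : ℝ) (hδ0 : 0 ≤ δ) (hδ1 : δ < 1)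
    (V : (ZMod m ⊕ ZMod m) → ((ZMod m ⊕ ZMod m) → Bool) → ℝ)
    (hV : ∀ p σ, 0 ≤ V p σ)
    (himpl : UndomProfiles (fun p σ => dGame m C p σ + V p σ) ⊆ rectSet (dDesired m))
    (hcost : gameCost (dGame m C) V ≤ δ) :
    IsExactCover m nh C
      {j : ZMod m |
        {b : Bool | Undominated (fun p σ => dGame m C p σ + V p σ) (Sum.inr j) b} =
          {true}} := by
  have key := fun (σ : (ZMod m ⊕ ZMod m) → Bool) hσ =>
    card_eq_one_of_undom hocc hV himpl (hcost.trans_lt hδ1) (σ := σ) hσ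
  choose τ hτ using exists_undominated_bool (fun p σ => dGame m C p σ + V p σ)
  -- A set player with both strategies undominated could switch, changing the count of an element.
  have huniq : ∀ j, ¬ Undominated (fun p σ => dGame m C p σ + V p σ) (Sum.inr j)
      (!τ (Sum.inr j)) := by
    intro j hj
    obtain ⟨a, ha⟩ : (C j).Nonempty := by
      rw [← Finset.card_pos, hC j]; norm_num
    have hmem : ∀ b, Function.update τ (Sum.inr j) b ∈
        UndomProfiles (fun p σ => dGame m C p σ + V p σ) := by
      intro b p
      by_cases hp : p = Sum.inr j
      · subst hp
        have hb : b = τ (Sum.inr j) ∨ b = !τ (Sum.inr j) := by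
          cases b <;> cases τ (Sum.inr j) <;> simp
        rcases hb with rfl | rfl
        · simpa using hτ (Sum.inr j)
        · simpa using hj
      · simpa [hp] using hτ p
    have hT := key _ (hmem true) a
    have hF := key _ (hmem false) a
    have hlt : (Finset.univ.filter fun k => a ∈ C k ∧
          Function.update τ (Sum.inr j) false (Sum.inr k) = true) ⊂
        (Finset.univ.filter fun k => a ∈ C k ∧
          Function.update τ (Sum.inr j) true (Sum.inr k) = true) := by
      rw [Finset.ssubset_iff_of_subset]
      · exact ⟨j, by simp [ha], by simp⟩
      · intro k
        by_cases hk : k = j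
        · subst hk; simp
        · simp [hk]
    have := Finset.card_lt_card hlt
    omega
  have hS : {j : ZMod m |
        {b : Bool | Undominated (fun p σ => dGame m C p σ + V p σ) (Sum.inr j) b} = {true}} =
      ((Finset.univ.filter fun j => τ (Sum.inr j) = true : Finset (ZMod m)) :
        Set (ZMod m)) := by
    ext j
    have h1 := hτ (Sum.inr j)
    have h2 := huniq j
    simp only [Set.mem_setOf_eq, Finset.coe_filter, Finset.mem_univ, true_and]
    constructor
    · intro h
      have : τ (Sum.inr j) ∈ ({true} : Set Bool) := h ▸ h1
      simpa using this
    · intro h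
      rw [h] at h1 h2
      ext b
      cases b
      · simpa using h2
      · simpa using h1
  rw [hS]
  refine ⟨?_, fun a => ?_⟩
  · rw [Set.ncard_coe_finset]
    have hcount := Finset.card_mul_eq_card_mul (s := (Finset.univ : Finset (ZMod m)))
      (t := Finset.univ.filter fun j => τ (Sum.inr j) = true)
      (fun a j => a ∈ C j) (m := 1) (n := 3)
      (fun a _ => by
        rw [← key τ hτ a]
        congr 1
        ext j
        simp [Finset.bipartiteAbove, and_comm])
      (fun j _ => by
        rw [← hC j]
        congr 1
        ext a
        simp [Finset.bipartiteBelow])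
    rw [Finset.card_univ, ZMod.card] at hcount
    omega
  · have hpos : 0 < (Finset.univ.filter fun j => a ∈ C j ∧ τ (Sum.inr j) = true).card := by
      rw [key τ hτ a]; norm_num
    obtain ⟨j, hj⟩ := Finset.card_pos.1 hpos
    simp only [Finset.mem_filter, Finset.mem_univ, true_and] at hj
    exact ⟨j, by simpa using hj.2, hj.1⟩
end

section
/- Consider the two-player game G constructed from a finite simple graph H as described, with desired sets O_1 = O_2 = C (the color-choice strategies). If there exists a payment promise 𝒱 such that 𝒳⋆_{G[𝒱]} = O_1 × O_2 and cost(𝒱) ≤ 1, then H admits a proper 3-coloring. -/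
/-- The common strategy set of both players: a vertex strategy (left), a color-choice
strategy `(v, c)` (middle), or the dummy strategy `d_{(v,c)}` (right); the bijection
from color-choice strategies to dummy strategies is the identity on `V × Fin 3`. -/
abbrev ColStrat (V : Type*) : Type _ := V ⊕ ((V × Fin 3) ⊕ (V × Fin 3))

/-- Utility of player 1 in the 3-coloring game (first argument is player 1's strategy;
all unspecified values are 0):
`U_1((v,c₁),(v,c₂)) = 3` if `c₁ = c₂` and `2` otherwise; for adjacent `u, v`:
`U_1((u,c₁),(v,c₂)) = 1` if `c₁ = c₂` and `2` otherwise; `U_1(v,(v,c)) = 3`;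
`U_1(v,(u,c)) = 2` for `u` adjacent to `v`; `U_1(x, d_x) = 1` for color-choice `x`. -/
def colU1 {V : Type*} [DecidableEq V] (H : SimpleGraph V) [DecidableRel H.Adj] :
    ColStrat V → ColStrat V → ℝ
  | Sum.inr (Sum.inl (v, c1)), Sum.inr (Sum.inl (w, c2)) =>
      if w = v then (if c2 = c1 then 3 else 2)
      else if H.Adj v w then (if c2 = c1 then 1 else 2) else 0
  | Sum.inl v, Sum.inr (Sum.inl (w, _)) =>
      if w = v then 3 else if H.Adj v w then 2 else 0
  | Sum.inr (Sum.inl x), Sum.inr (Sum.inr y) => if y = x then 1 else 0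
  | _, _ => 0

/-- The symmetric two-player game built from the graph `H`. -/
def colGame {V : Type*} [DecidableEq V] (H : SimpleGraph V) [DecidableRel H.Adj] :
    Fin 2 → (Fin 2 → ColStrat V) → ℝ :=
  fun i σ => if i = 0 then colU1 H (σ 0) (σ 1) else colU1 H (σ 1) (σ 0)

/-- The desired strategy set `O_1 = O_2 = C`, the set of color-choice strategies. -/
def colDesired (V : Type*) : Set (ColStrat V) :=
  {s | ∃ p : V × Fin 3, s = Sum.inr (Sum.inl p)}

theorem Dominates.trans {ι : Type*} [DecidableEq ι] {S : ι → Type*}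
    {U : ι → (∀ j, S j) → ℝ} {i : ι} {x y z : S i}
    (hxy : Dominates U i x y) (hyz : Dominates U i y z) : Dominates U i x z := by
  refine ⟨fun σ => (hyz.1 σ).trans (hxy.1 σ), ?_⟩
  obtain ⟨σ, hσ⟩ := hyz.2
  exact ⟨σ, hσ.trans_le (hxy.1 σ)⟩

theorem exists_undominated_dominates {ι : Type*} [DecidableEq ι] {S : ι → Type*}
    (U : ι → (∀ j, S j) → ℝ) (i : ι) [Finite (S i)] (y : S i) (hy : ¬ Undominated U i y) :
    ∃ x, Undominated U i x ∧ Dominates U i x y := by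
  have : IsTrans (S i) (Dominates U i) := ⟨fun _ _ _ h h' => h.trans h'⟩
  have : Std.Irrefl (Dominates U i) := ⟨fun _ h => h.2.elim fun _ hσ => lt_irrefl _ hσ⟩
  have wf : WellFounded (Dominates U i) := Finite.wellFounded_of_trans_of_irrefl _
  obtain ⟨m, hm, hmin⟩ := wf.has_min {x | Dominates U i x y} (not_not.mp hy)
  exact ⟨m, fun ⟨z, hz⟩ => hmin z (hz.trans hm) hz, hm⟩

/-- The color-choice strategy of a vertex-color pair. -/
abbrev colC {V : Type*} (p : V × Fin 3) : ColStrat V := Sum.inr (Sum.inl p)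

/-- The profile in which player `i` plays `x` and the opponent plays `y`. -/
def seatProfile {V : Type*} (i : Fin 2) (x y : ColStrat V) : Fin 2 → ColStrat V :=
  Function.update (fun _ => y) i x

theorem colGame_seatProfile {V : Type*} [DecidableEq V] (H : SimpleGraph V) [DecidableRel H.Adj]
    (i : Fin 2) (x y : ColStrat V) : colGame H i (seatProfile i x y) = colU1 H x y := by
  fin_cases i <;> simp [colGame, seatProfile]

theorem seatProfile_swap {V : Type*} (x y : ColStrat V) :
    seatProfile 1 y x = seatProfile 0 x y := by
  funext j
  fin_cases j <;> simp [seatProfile]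

theorem exists_dominating_color {V : Type*} [Finite V] [DecidableEq V]
    (H : SimpleGraph V) [DecidableRel H.Adj] (W : Fin 2 → (Fin 2 → ColStrat V) → ℝ)
    (hW : ∀ i σ, 0 ≤ W i σ)
    (hU : UndomProfiles (fun i σ => colGame H i σ + W i σ) =
      rectSet (fun _ : Fin 2 => colDesired V))
    (hle : ∀ i p q, W i (seatProfile i (colC p) (colC q)) ≤ 1) (i : Fin 2) (v : V) :
    ∃ c : Fin 3, ∀ y, colU1 H (Sum.inl v) y ≤
      colU1 H (colC (v, c)) y + W i (seatProfile i (colC (v, c)) y) := by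
  have hC : ∀ x, Undominated (fun i σ => colGame H i σ + W i σ) i x → x ∈ colDesired V := by
    intro x hx
    have h0 : (fun _ => colC (v, 0)) ∈ rectSet (fun _ : Fin 2 => colDesired V) :=
      fun _ => ⟨_, rfl⟩
    rw [← hU] at h0
    have h1 : Function.update (fun _ => colC (v, 0)) i x ∈
        UndomProfiles (fun i σ => colGame H i σ + W i σ) := by
      intro j
      by_cases hj : j = i
      · subst hj
        simpa using hx
      · simpa [hj] using h0 j
    rw [hU] at h1
    simpa using h1 i
  have hnot : ¬ Undominated (fun i σ => colGame H i σ + W i σ) i (Sum.inl v) := by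
    intro h
    obtain ⟨p, hp⟩ := hC _ h
    cases hp
  obtain ⟨x, hx, hdom⟩ := exists_undominated_dominates _ i _ hnot
  obtain ⟨⟨w, c⟩, rfl⟩ := hC x hx
  have key : ∀ y, colU1 H (Sum.inl v) y ≤
      colU1 H (colC (w, c)) y + W i (seatProfile i (colC (w, c)) y) := by
    intro y
    have h := hdom.1 (fun _ => y)
    change colGame H i (seatProfile i _ y) + W i (seatProfile i _ y) ≤
      colGame H i (seatProfile i _ y) + W i (seatProfile i _ y) at h
    rw [colGame_seatProfile, colGame_seatProfile] at h
    linarith [hW i (seatProfile i (Sum.inl v) y)]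
  have hwv : w = v := by
    by_contra hne
    -- `v` earns `3` against `(v, c)`, whereas `(w, c)` earns at most `1` before payments.
    have h := key (colC (v, c))
    have h1 := hle i (w, c) (v, c)
    have hne' : v ≠ w := fun h => hne h.symm
    simp only [colU1, if_true, hne', if_false] at h
    split_ifs at h <;> linarith
  subst hwv
  exact ⟨c, key⟩

/-- if the constructed two-player game has a payment promise implementing
`O_1 × O_2` exactly with cost at most 1, then `H` admits a proper 3-coloring. -/
theorem coloring_game_backward {V : Type*} [Fintype V] [DecidableEq V]
    (H : SimpleGraph V) [DecidableRel H.Adj]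
    (himpl : ∃ W : Fin 2 → (Fin 2 → ColStrat V) → ℝ,
      (∀ i σ, 0 ≤ W i σ) ∧
      UndomProfiles (fun i σ => colGame H i σ + W i σ) =
        rectSet (fun _ : Fin 2 => colDesired V) ∧
      gameCost (colGame H) W ≤ 1) :
    ∃ φ : V → Fin 3, ∀ u w : V, H.Adj u w → φ u ≠ φ w := by
  obtain ⟨W, hW, hU, hcost⟩ := himpl
  have hsum : ∀ p q, W 0 (seatProfile 0 (colC p) (colC q)) +
      W 1 (seatProfile 0 (colC p) (colC q)) ≤ 1 := by
    intro p q
    refine le_trans ?_ hcost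
    refine le_csSup (Set.toFinite _).bddAbove ⟨seatProfile 0 (colC p) (colC q), ?_, by simp⟩
    rw [hU]
    intro j
    fin_cases j
    · exact ⟨p, by simp [seatProfile]⟩
    · exact ⟨q, by simp [seatProfile]⟩
  have hle : ∀ i p q, W i (seatProfile i (colC p) (colC q)) ≤ 1 := by
    intro i p q
    fin_cases i
    · exact (le_add_of_nonneg_right (hW _ _)).trans (hsum p q)
    · change W 1 (seatProfile 1 _ _) ≤ 1
      rw [seatProfile_swap]
      exact (le_add_of_nonneg_left (hW _ _)).trans (hsum q p)
  choose φ hφ using exists_dominating_color H W hW hU hle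
  have hsame : ∀ i v c, c ≠ φ i v →
      1 ≤ W i (seatProfile i (colC (v, φ i v)) (colC (v, c))) := by
    intro i v c hc
    have h := hφ i v (colC (v, c))
    simp only [colU1, if_true, hc, if_false] at h
    linarith
  have hadj : ∀ i u v, H.Adj v u →
      1 ≤ W i (seatProfile i (colC (v, φ i v)) (colC (u, φ i v))) := by
    intro i u v huv
    have h := hφ i v (colC (u, φ i v))
    simp only [colU1, if_true, huv.ne', huv, if_false] at h
    linarith
  have heq : ∀ v, φ 0 v = φ 1 v := by
    intro v
    by_contra hne
    have h0 := hsame 0 v (φ 1 v) (Ne.symm hne)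
    have h1 := hsame 1 v (φ 0 v) hne
    rw [seatProfile_swap] at h1
    linarith [hsum (v, φ 0 v) (v, φ 1 v)]
  refine ⟨φ 0, fun u w huw hc => ?_⟩
  have h0 := hadj 0 w u huw
  have h1 := hadj 1 u w huw.symm
  rw [seatProfile_swap, ← heq w, ← hc] at h1
  linarith [hsum (u, φ 0 u) (w, φ 0 u)]
end
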